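/- Let W_u be a Walecki tournament and let a be the arc of W_u between vertices i, j ∈ ZMod n, where i and j have opposite parity and are not consecutive (j ∉ {i−1, i+1}). Suppose i, j, and ℓ ∈ ZMod n induce a directed triangle in W_u. Then one of the following holds: (1) d(a) > 1; (2) ℓ ∈ {i−1, i+1, j−1, j+1}; (3) 3 divides 2m+1 and there exist i', j' with {i', j'} = {i, j} (as sets), j' = i' + (2m+1)/3 (the integer (2m+1)/3 reduced mod n), and ℓ = 2j' − i' − 1; or (4) 3 divides 4m+1 and there exist i', j' with {i', j'} = {i, j}, j' = i' + (4m+1)/3 (reduced mod n), and ℓ = 2j' − i' − 1. -/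

import Mathlib

/-- Vertex set of the Walecki tournament on `2*m+1` vertices:
`ZMod (2*m)` together with the extra vertex `*`, encoded as `none`. -/
abbrev WVert (m : ℕ) := Option (ZMod (2 * m))

/-- The arc relation of the directed Hamilton cycle `C_j⁺`:
it has arcs `(*, j)` and `(j+m, *)`, together with the arcs `(j−k, j+k+1)` for
`0 ≤ k ≤ m−1` and `(j+k, j−k)` for `1 ≤ k ≤ m−1` (arithmetic in `ZMod (2*m)`). -/
def Cplus (m : ℕ) (j : ZMod (2 * m)) (x y : WVert m) : Prop :=
  (x = none ∧ y = some j) ∨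
  (x = some (j + (m : ZMod (2 * m))) ∧ y = none) ∨
  (∃ k : ℕ, k ≤ m - 1 ∧ x = some (j - (k : ZMod (2 * m))) ∧
    y = some (j + (k : ZMod (2 * m)) + 1)) ∨
  (∃ k : ℕ, 1 ≤ k ∧ k ≤ m - 1 ∧ x = some (j + (k : ZMod (2 * m))) ∧
    y = some (j - (k : ZMod (2 * m))))

/-- The arc relation of the Walecki tournament `W_u` with signature `u ∈ (ZMod 2)^m`:
the arcs of `C_j⁺` when `u_j = 1`, and the arcs of `C_j⁻` (the reverse of `C_j⁺`)
when `u_j = 0`, for `0 ≤ j ≤ m−1`. -/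
def warc (m : ℕ) (u : Fin m → ZMod 2) (x y : WVert m) : Prop :=
  ∃ j : Fin m, (u j = 1 ∧ Cplus m ((j : ℕ) : ZMod (2 * m)) x y) ∨
               (u j = 0 ∧ Cplus m ((j : ℕ) : ZMod (2 * m)) y x)

/-- `d(a)` for the arc `a = (x,y)`: the number of vertices `z ≠ x, y` such that
`(y,z)` and `(z,x)` are both arcs, i.e. `x, y, z` span a directed triangle. -/
noncomputable def dcount {α : Type*} (arc : α → α → Prop) (x y : α) : ℕ :=
  {z : α | z ≠ x ∧ z ≠ y ∧ arc y z ∧ arc z x}.ncard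

/-- `i(a)` for the arc `a = (x,y)`: the number of vertices `z ≠ x, y` with arcs
`(z,x)` and `(z,y)`. -/
noncomputable def icount {α : Type*} (arc : α → α → Prop) (x y : α) : ℕ :=
  {z : α | z ≠ x ∧ z ≠ y ∧ arc z x ∧ arc z y}.ncard

/-- `o(a)` for the arc `a = (x,y)`: the number of vertices `z ≠ x, y` with arcs
`(x,z)` and `(y,z)`. -/
noncomputable def ocount {α : Type*} (arc : α → α → Prop) (x y : α) : ℕ :=
  {z : α | z ≠ x ∧ z ≠ y ∧ arc x z ∧ arc y z}.ncard

/-- `b(a)` for the arc `a = (x,y)`: the number of vertices `z ≠ x, y` with arcs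
`(x,z)` and `(z,y)`. -/
noncomputable def bcount {α : Type*} (arc : α → α → Prop) (x y : α) : ℕ :=
  {z : α | z ≠ x ∧ z ≠ y ∧ arc x z ∧ arc z y}.ncard

/-- Two elements of `ZMod (2*m)` have the same parity if their difference is
twice an element of `ZMod (2*m)`. -/
def sameParity (m : ℕ) (x y : ZMod (2 * m)) : Prop :=
  ∃ c : ZMod (2 * m), x - y = 2 * c

/-- Three distinct vertices `x, y, z` induce a directed triangle:
the three arcs among them form a directed 3-cycle. -/
def dirTri {α : Type*} (arc : α → α → Prop) (x y z : α) : Prop :=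
  x ≠ y ∧ y ≠ z ∧ x ≠ z ∧
    ((arc x y ∧ arc y z ∧ arc z x) ∨ (arc x z ∧ arc z y ∧ arc y x))

/-- The all-ones signature `1_m`. -/
def onesSig (m : ℕ) : Fin m → ZMod 2 := fun _ => 1

/-- The complementing register shift `R_1`:
`uR_1 = (1 − u_{m−1}, u_0, u_1, …, u_{m−2})`. -/
def shift1 (m : ℕ) (u : Fin m → ZMod 2) : Fin m → ZMod 2 := fun i =>
  if (i : ℕ) = 0 then 1 - u ⟨m - 1, Nat.sub_lt i.pos Nat.one_pos⟩
  else u ⟨(i : ℕ) - 1, lt_of_le_of_lt (Nat.sub_le _ _) i.isLt⟩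

/-- The inverse of the complementing register shift `R_1`:
`(uR_1⁻¹)_i = u_{i+1}` for `i < m−1` and `(uR_1⁻¹)_{m−1} = 1 − u_0`. -/
def unshift1 (m : ℕ) (u : Fin m → ZMod 2) : Fin m → ZMod 2 := fun i =>
  if h : (i : ℕ) = m - 1 then 1 - u ⟨0, i.pos⟩
  else u ⟨(i : ℕ) + 1, by have h1 := i.isLt; omega⟩

/-- `R_t` for an integer `t`: the `t`-th iterate of the complementing register
shift `R_1` (inverse iterates when `t` is negative). `Rshift m t u = u R_t`. -/
def Rshift (m : ℕ) (t : ℤ) (u : Fin m → ZMod 2) : Fin m → ZMod 2 :=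
  if 0 ≤ t then (shift1 m)^[t.toNat] u else (unshift1 m)^[(-t).toNat] u

/-- The permutation `σ = (0 1 2 ⋯ m−1)(n−1 n−2 ⋯ m)` of the vertex set:
it fixes `*`, maps `k ↦ k+1` for `0 ≤ k ≤ m−2`, `m−1 ↦ 0`,
`k ↦ k−1` for `m+1 ≤ k ≤ n−1`, and `m ↦ n−1`. -/
def sigmaFun (m : ℕ) : WVert m → WVert m
  | none => none
  | some x =>
      if x.val < m then some ((((x.val + 1) % m : ℕ)) : ZMod (2 * m))
      else some (((m + (x.val - m + (m - 1)) % m : ℕ)) : ZMod (2 * m))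

/-- The inverse of the permutation `σ`. -/
def sigmaInvFun (m : ℕ) : WVert m → WVert m
  | none => none
  | some x =>
      if x.val < m then some ((((x.val + (m - 1)) % m : ℕ)) : ZMod (2 * m))
      else some (((m + (x.val - m + 1) % m : ℕ)) : ZMod (2 * m))

/-- `σ^t` for an integer `t`: the `t`-th iterate of `σ`
(inverse iterates when `t` is negative). -/
def sigmaZ (m : ℕ) (t : ℤ) : WVert m → WVert m :=
  if 0 ≤ t then (sigmaFun m)^[t.toNat] else (sigmaInvFun m)^[(-t).toNat]

-- HELPERS
/-- Extended signature on `ZMod (2*m)`. -/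
def waleckiS (m : ℕ) (u : Fin m → ZMod 2) (c : ZMod (2 * m)) : Prop :=
  ∃ j : Fin m, (u j = 1 ∧ c = ((j : ℕ) : ZMod (2 * m))) ∨
    (u j = 0 ∧ c = ((j : ℕ) : ZMod (2 * m)) + (m : ZMod (2 * m)))

theorem wal_two_m (m : ℕ) : (m : ZMod (2 * m)) + (m : ZMod (2 * m)) = 0 := by
  have := ZMod.natCast_self (2 * m)
  push_cast at this
  linear_combination this

theorem wal_cast_inj (m : ℕ) (hm : 1 ≤ m) (a b : ℕ) (ha : a < 2 * m) (hb : b < 2 * m)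
    (h : (a : ZMod (2 * m)) = (b : ZMod (2 * m))) : a = b := by
  have h1 := congrArg ZMod.val h
  rwa [ZMod.val_cast_of_lt ha, ZMod.val_cast_of_lt hb] at h1

theorem wal_S_iff (m : ℕ) (hm : 1 ≤ m) (u : Fin m → ZMod 2) (c : ZMod (2 * m)) :
    waleckiS m u c ↔ (∃ h : c.val < m, u ⟨c.val, h⟩ = 1) ∨
      (∃ h : c.val - m < m, m ≤ c.val ∧ u ⟨c.val - m, h⟩ = 0) := by
  have : NeZero (2 * m) := ⟨by omega⟩
  constructor
  · rintro ⟨⟨j, hj⟩, ⟨h1, h2⟩ | ⟨h1, h2⟩⟩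
    · left
      have : c.val = j := by rw [h2]; exact ZMod.val_cast_of_lt (by simp; omega)
      exact ⟨by omega, by simpa [this] using h1⟩
    · right
      have : c.val = j + m := by
        rw [h2]; rw [← Nat.cast_add]; exact ZMod.val_cast_of_lt (by simp; omega)
      exact ⟨by omega, by omega, by simpa [this] using h1⟩
  · rintro (⟨h, h1⟩ | ⟨h, h2, h1⟩)
    · exact ⟨_, Or.inl ⟨h1, by simp⟩⟩
    · refine ⟨_, Or.inr ⟨h1, ?_⟩⟩
      rw [← Nat.cast_add]
      simp [Nat.sub_add_cancel h2]

theorem wal_val_add_m (m : ℕ) (hm : 1 ≤ m) (c : ZMod (2 * m)) :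
    (c + (m : ZMod (2 * m))).val = (c.val + m) % (2 * m) := by
  have : NeZero (2 * m) := ⟨by omega⟩
  rw [ZMod.val_add, ZMod.val_cast_of_lt (by omega)]

theorem wal_S_add (m : ℕ) (hm : 1 ≤ m) (u : Fin m → ZMod 2) (c : ZMod (2 * m)) :
    waleckiS m u (c + (m : ZMod (2 * m))) ↔ ¬ waleckiS m u c := by
  have : NeZero (2 * m) := ⟨by omega⟩
  have hc := c.val_lt
  have hz : ∀ t : ZMod 2, (t = 0 ↔ ¬ t = 1) := by decide
  rw [wal_S_iff m hm, wal_S_iff m hm, wal_val_add_m m hm]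
  by_cases h : c.val < m
  · have e : (c.val + m) % (2 * m) = c.val + m := Nat.mod_eq_of_lt (by omega)
    have e2 : ¬ (m ≤ c.val) := by omega
    simp [e, h, e2, hz]
  · have e : (c.val + m) % (2 * m) = c.val - m := by
      rw [Nat.mod_eq_sub_mod (by omega), Nat.mod_eq_of_lt (by omega)]; omega
    have e2 : m ≤ c.val := by omega
    have e3 : c.val - m < m := by omega
    have e4 : ¬ (m ≤ c.val - m) := by omega
    simp [e, h, e2, e3, e4, hz]

/-- Arithmetic description of the arcs between two ordinary vertices. -/
theorem wal_C_some (m : ℕ) (hm : 1 ≤ m) (c a b : ZMod (2 * m)) :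
    Cplus m c (some a) (some b) ↔
      ((b - a).val = 2 * (c - a).val + 1 ∨
        ((b - a).val + 2 * m = 2 * (c - a).val ∧ (b - a).val ≠ 0)) := by
  have : NeZero (2 * m) := ⟨by omega⟩
  obtain ⟨d, hd, hdb⟩ : ∃ d : ℕ, d < 2 * m ∧ b = a + (d : ZMod (2 * m)) :=
    ⟨(b - a).val, ZMod.val_lt _, by simp⟩
  obtain ⟨e, he, hec⟩ : ∃ e : ℕ, e < 2 * m ∧ c = a + (e : ZMod (2 * m)) :=
    ⟨(c - a).val, ZMod.val_lt _, by simp⟩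
  have h0 : ((2 * m : ℕ) : ZMod (2 * m)) = 0 := ZMod.natCast_self _
  subst hdb hec
  simp only [add_sub_cancel_left, ZMod.val_cast_of_lt hd, ZMod.val_cast_of_lt he]
  simp only [Cplus, reduceCtorEq, false_and, and_false, false_or, Option.some.injEq]
  constructor
  · rintro (⟨k, hk, h1, h2⟩ | ⟨k, hk1, hk, h1, h2⟩)
    · left
      have e1 : e = k := wal_cast_inj m hm _ _ he (by omega) (by linear_combination -h1)
      subst e1
      apply wal_cast_inj m hm _ _ hd (by omega)
      push_cast; linear_combination h2
    · right
      have e1 : e = 2 * m - k := by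
        apply wal_cast_inj m hm _ _ he (by omega)
        rw [Nat.cast_sub (by omega), h0]; linear_combination -h1
      have e2 : d = 2 * m - 2 * k := by
        apply wal_cast_inj m hm _ _ hd (by omega)
        rw [Nat.cast_sub (by omega), h0]; push_cast; linear_combination h2 - h1
      omega
  · rintro (h | ⟨h, h'⟩)
    · left
      refine ⟨e, by omega, by ring, ?_⟩
      rw [h]; push_cast; ring
    · right
      refine ⟨2 * m - e, by omega, by omega, ?_, ?_⟩
      · rw [Nat.cast_sub (by omega), h0]; ring
      · rw [Nat.cast_sub (by omega), h0]
        have := congrArg (Nat.cast : ℕ → ZMod (2 * m)) h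
        rw [Nat.cast_add, h0] at this; push_cast at this; linear_combination this

theorem wal_C_none_some (m : ℕ) (c b : ZMod (2 * m)) :
    Cplus m c none (some b) ↔ b = c := by
  simp [Cplus]

theorem wal_C_some_none (m : ℕ) (c a : ZMod (2 * m)) :
    Cplus m c (some a) none ↔ a = c + (m : ZMod (2 * m)) := by
  simp [Cplus]

theorem wal_C_none_none (m : ℕ) (c : ZMod (2 * m)) :
    ¬ Cplus m c none none := by
  simp [Cplus]

theorem wal_C_symm (m : ℕ) (hm : 1 ≤ m) (c : ZMod (2 * m)) (x y : WVert m) :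
    Cplus m (c + (m : ZMod (2 * m))) x y ↔ Cplus m c y x := by
  have : NeZero (2 * m) := ⟨by omega⟩
  have h2 := wal_two_m m
  rcases x with _ | a <;> rcases y with _ | b
  · simp [wal_C_none_none]
  · rw [wal_C_none_some, wal_C_some_none]
  · rw [wal_C_none_some, wal_C_some_none, add_assoc, h2, add_zero]
  · rw [wal_C_some m hm, wal_C_some m hm]
    obtain ⟨d, hd, hdb⟩ : ∃ d : ℕ, d < 2 * m ∧ b = a + (d : ZMod (2 * m)) :=
      ⟨(b - a).val, ZMod.val_lt _, by simp⟩
    obtain ⟨e, he, hec⟩ : ∃ e : ℕ, e < 2 * m ∧ c = a + (e : ZMod (2 * m)) :=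
      ⟨(c - a).val, ZMod.val_lt _, by simp⟩
    have h0 : ((2 * m : ℕ) : ZMod (2 * m)) = 0 := ZMod.natCast_self _
    subst hdb hec
    have r1 : a + (d : ZMod (2 * m)) - a = (d : ℕ) := by ring
    have r2 : a + (e : ZMod (2 * m)) + m - a = ((e + m : ℕ) : ZMod (2 * m)) := by
      push_cast; ring
    have r3 : a - (a + (d : ZMod (2 * m))) = ((2 * m - d : ℕ) : ZMod (2 * m)) := by
      rw [Nat.cast_sub hd.le, h0]; ring
    have r4 : a + (e : ZMod (2 * m)) - (a + (d : ZMod (2 * m))) =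
        ((e + (2 * m - d) : ℕ) : ZMod (2 * m)) := by
      rw [Nat.cast_add, Nat.cast_sub hd.le, h0]; ring
    rw [r1, r2, r3, r4]
    simp only [ZMod.val_natCast]
    have key : ∀ t : ℕ, t < 4 * m →
        (t < 2 * m ∧ t % (2 * m) = t) ∨ (2 * m ≤ t ∧ t % (2 * m) = t - 2 * m) := by
      intro t ht
      by_cases h : t < 2 * m
      · exact Or.inl ⟨h, Nat.mod_eq_of_lt h⟩
      · right
        refine ⟨by omega, ?_⟩
        rw [Nat.mod_eq_sub_mod (by omega), Nat.mod_eq_of_lt (by omega)]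
    have k1 := key d (by omega)
    have k2 := key (e + m) (by omega)
    have k3 := key (2 * m - d) (by omega)
    have k4 := key (e + (2 * m - d)) (by omega)
    omega

theorem wal_arc_iff (m : ℕ) (hm : 1 ≤ m) (u : Fin m → ZMod 2) (x y : WVert m) :
    warc m u x y ↔ ∃ c, waleckiS m u c ∧ Cplus m c x y := by
  constructor
  · rintro ⟨j, ⟨h1, h2⟩ | ⟨h1, h2⟩⟩
    · exact ⟨_, ⟨j, Or.inl ⟨h1, rfl⟩⟩, h2⟩
    · exact ⟨_, ⟨j, Or.inr ⟨h1, rfl⟩⟩, (wal_C_symm m hm _ _ _).2 h2⟩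
  · rintro ⟨c, ⟨j, ⟨h1, rfl⟩ | ⟨h1, rfl⟩⟩, h2⟩
    · exact ⟨j, Or.inl ⟨h1, h2⟩⟩
    · exact ⟨j, Or.inr ⟨h1, (wal_C_symm m hm _ _ _).1 h2⟩⟩

theorem wal_C_irrefl (m : ℕ) (hm : 1 ≤ m) (c : ZMod (2 * m)) (x : WVert m) :
    ¬ Cplus m c x x := by
  rcases x with _ | a
  · exact wal_C_none_none m c
  · rw [wal_C_some m hm]; simp

theorem wal_val_sub_inj (m : ℕ) (hm : 1 ≤ m) (a b c : ZMod (2 * m))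
    (h : (b - a).val = (c - a).val) : b = c := by
  have : NeZero (2 * m) := ⟨by omega⟩
  exact sub_left_injective (ZMod.val_injective _ h)

/-- Each ordered pair lies in at most one cycle. -/
theorem wal_C_unique (m : ℕ) (hm : 1 ≤ m) (c c' : ZMod (2 * m)) (x y : WVert m)
    (h : Cplus m c x y) (h' : Cplus m c' x y) : c = c' := by
  have : NeZero (2 * m) := ⟨by omega⟩
  rcases x with _ | a <;> rcases y with _ | b
  · exact absurd h (wal_C_none_none m c)
  · rw [wal_C_none_some] at h h'; rw [← h, ← h']
  · rw [wal_C_some_none] at h h'; exact add_right_cancel (h.symm.trans h')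
  · rw [wal_C_some m hm] at h h'
    have h1 := (c - a).val_lt
    have h2 := (c' - a).val_lt
    have h3 := (b - a).val_lt
    apply wal_val_sub_inj m hm a
    omega

theorem wal_C_exists (m : ℕ) (hm : 1 ≤ m) (x y : WVert m) (hxy : x ≠ y) :
    ∃ c, Cplus m c x y := by
  have : NeZero (2 * m) := ⟨by omega⟩
  rcases x with _ | a <;> rcases y with _ | b
  · exact absurd rfl hxy
  · exact ⟨b, (wal_C_none_some m b b).2 rfl⟩
  · refine ⟨a + (m : ZMod (2 * m)), (wal_C_some_none m _ _).2 ?_⟩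
    rw [add_assoc, wal_two_m, add_zero]
  · have h3 := (b - a).val_lt
    have h0 : (b - a).val ≠ 0 := by
      rw [Ne, ZMod.val_eq_zero, sub_eq_zero]
      rintro rfl; exact hxy rfl
    rcases Nat.even_or_odd' (b - a).val with ⟨k, hk | hk⟩
    · refine ⟨a + ((m + k : ℕ) : ZMod (2 * m)), (wal_C_some m hm _ _ _).2 ?_⟩
      rw [add_sub_cancel_left, ZMod.val_cast_of_lt (by omega)]; omega
    · refine ⟨a + (k : ZMod (2 * m)), (wal_C_some m hm _ _ _).2 ?_⟩
      rw [add_sub_cancel_left, ZMod.val_cast_of_lt (by omega)]; omega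

/-- The successor of a vertex on a cycle is unique. -/
theorem wal_C_fun (m : ℕ) (hm : 1 ≤ m) (c : ZMod (2 * m)) (x y y' : WVert m)
    (h : Cplus m c x y) (h' : Cplus m c x y') : y = y' := by
  have : NeZero (2 * m) := ⟨by omega⟩
  have aux : ∀ a b : ZMod (2 * m), Cplus m c (some a) none → ¬ Cplus m c (some a) (some b) := by
    intro a b h1 h2
    rw [wal_C_some_none] at h1
    rw [wal_C_some m hm] at h2
    have e : c - a = (m : ZMod (2 * m)) := by
      rw [h1]; linear_combination - wal_two_m m
    rw [e, ZMod.val_cast_of_lt (by omega)] at h2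
    have h3 := (b - a).val_lt
    omega
  rcases x with _ | a <;> rcases y with _ | b <;> rcases y' with _ | b'
  · rfl
  · exact absurd h (wal_C_none_none m c)
  · exact absurd h' (wal_C_none_none m c)
  · rw [wal_C_none_some] at h h'; rw [h, h']
  · rfl
  · exact absurd h' (aux _ _ h)
  · exact absurd h (aux _ _ h')
  · rw [wal_C_some m hm] at h h'
    have h1 := (c - a).val_lt
    have h2 := (b' - a).val_lt
    have h3 := (b - a).val_lt
    congr 1
    apply wal_val_sub_inj m hm a
    omega

theorem wal_C_total (m : ℕ) (hm : 1 ≤ m) (c : ZMod (2 * m)) (x : WVert m) :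
    ∃ y, Cplus m c x y := by
  have : NeZero (2 * m) := ⟨by omega⟩
  rcases x with _ | a
  · exact ⟨_, (wal_C_none_some m c c).2 rfl⟩
  · have he := (c - a).val_lt
    rcases lt_trichotomy (c - a).val m with h | h | h
    · refine ⟨some (a + ((2 * (c - a).val + 1 : ℕ) : ZMod (2 * m))), (wal_C_some m hm _ _ _).2 ?_⟩
      rw [add_sub_cancel_left, ZMod.val_cast_of_lt (by omega)]; omega
    · refine ⟨none, (wal_C_some_none m _ _).2 ?_⟩
      have e : c - a = (m : ZMod (2 * m)) := by
        have h' := congrArg (Nat.cast : ℕ → ZMod (2 * m)) h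
        simpa using h'
      linear_combination (-1) * e - wal_two_m m
    · refine ⟨some (a + ((2 * (c - a).val - 2 * m : ℕ) : ZMod (2 * m))),
        (wal_C_some m hm _ _ _).2 ?_⟩
      rw [add_sub_cancel_left, ZMod.val_cast_of_lt (by omega)]; omega

theorem wal_arc_of_C (m : ℕ) (hm : 1 ≤ m) (u : Fin m → ZMod 2) (c : ZMod (2 * m))
    (x y : WVert m) (h : Cplus m c x y) : warc m u x y ↔ waleckiS m u c := by
  rw [wal_arc_iff m hm]
  constructor
  · rintro ⟨c', h1, h2⟩
    rwa [wal_C_unique m hm c c' x y h h2]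
  · exact fun h1 => ⟨c, h1, h⟩

theorem wal_arc_tour (m : ℕ) (hm : 1 ≤ m) (u : Fin m → ZMod 2) (x y : WVert m)
    (hxy : x ≠ y) : warc m u y x ↔ ¬ warc m u x y := by
  obtain ⟨c, hc⟩ := wal_C_exists m hm x y hxy
  rw [wal_arc_of_C m hm u c x y hc,
    wal_arc_of_C m hm u _ y x ((wal_C_symm m hm c y x).2 hc), wal_S_add m hm]

theorem wal_arc_irrefl (m : ℕ) (hm : 1 ≤ m) (u : Fin m → ZMod 2) (x : WVert m) :
    ¬ warc m u x x := by
  rw [wal_arc_iff m hm]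
  rintro ⟨c, -, h⟩
  exact wal_C_irrefl m hm c x h

/-- All out-degrees agree. -/
theorem wal_outdeg (m : ℕ) (hm : 1 ≤ m) (u : Fin m → ZMod 2) (x : WVert m) :
    {y | warc m u x y}.ncard = {c | waleckiS m u c}.ncard := by
  symm
  choose f hf using fun c => wal_C_total m hm c x
  refine Set.ncard_congr (fun c _ => f c) ?_ ?_ ?_
  · intro c hc
    exact (wal_arc_of_C m hm u c x _ (hf c)).2 hc
  · intro c c' _ _ h
    have h' : f c = f c' := h
    exact wal_C_unique m hm c c' x (f c) (hf c) (h' ▸ hf c')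
  · intro y hy
    obtain ⟨c, hc, h⟩ := (wal_arc_iff m hm u x y).1 hy
    exact ⟨c, hc, wal_C_fun m hm c x _ _ (hf c) h⟩

/-- Two vertices on which `x` and `y` disagree force `d > 1`. -/
theorem wal_two_disagree (m : ℕ) (hm : 1 ≤ m) (u : Fin m → ZMod 2) (x y l w : WVert m)
    (ha : warc m u x y) (hl : warc m u y l ∧ warc m u l x)
    (hwx : w ≠ x) (hwy : w ≠ y) (hwl : w ≠ l)
    (hw : ¬ (warc m u x w ↔ warc m u y w)) :
    1 < dcount (warc m u) x y := by
  classical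
  have : NeZero (2 * m) := ⟨by omega⟩
  have hD : {z | z ≠ x ∧ z ≠ y ∧ warc m u y z ∧ warc m u z x} =
      {z | warc m u y z} \ {z | warc m u x z} := by
    ext z
    simp only [Set.mem_ofPred_eq, Set.mem_sdiff]
    constructor
    · rintro ⟨h1, h2, h3, h4⟩
      exact ⟨h3, (wal_arc_tour m hm u x z h1.symm).1 h4⟩
    · rintro ⟨h3, h4⟩
      have h1 : z ≠ x := by
        rintro rfl
        have hne : z ≠ y := by rintro rfl; exact wal_arc_irrefl m hm u _ ha
        exact (wal_arc_tour m hm u z y hne).1 h3 ha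
      have h2 : z ≠ y := by rintro rfl; exact wal_arc_irrefl m hm u _ h3
      exact ⟨h1, h2, h3, (wal_arc_tour m hm u x z h1.symm).2 h4⟩
  unfold dcount
  by_cases hyw : warc m u y w
  · have hxw : ¬ warc m u x w := fun h => hw ⟨fun _ => hyw, fun _ => h⟩
    rw [Set.one_lt_ncard (Set.toFinite _), hD]
    refine ⟨w, ⟨hyw, hxw⟩, l, ⟨hl.1, ?_⟩, hwl⟩
    have hne : x ≠ l := by rintro rfl; exact wal_arc_irrefl m hm u _ hl.2
    exact (wal_arc_tour m hm u x l hne).1 hl.2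
  · have hxw : warc m u x w := by
      by_contra h
      exact hw ⟨fun h' => absurd h' h, fun h' => absurd h' hyw⟩
    have hB : 1 < ({z | warc m u x z} \ {z | warc m u y z}).ncard := by
      rw [Set.one_lt_ncard (Set.toFinite _)]
      exact ⟨w, ⟨hxw, hyw⟩, y, ⟨ha, wal_arc_irrefl m hm u y⟩, hwy⟩
    have e := (wal_outdeg m hm u x).trans (wal_outdeg m hm u y).symm
    have e1 := Set.ncard_inter_add_ncard_sdiff_eq_ncard {z | warc m u x z} {z | warc m u y z}
      (Set.toFinite _)
    have e2 := Set.ncard_inter_add_ncard_sdiff_eq_ncard {z | warc m u y z} {z | warc m u x z}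
      (Set.toFinite _)
    rw [Set.inter_comm] at e2
    rw [hD]
    omega

/-- The vertices `i`, `j` disagree on one of `i+1`, `j+1`, `*`. -/
theorem wal_disagree (m : ℕ) (hm : 1 ≤ m) (u : Fin m → ZMod 2) (i j : ZMod (2 * m))
    (hpar : ¬ sameParity m i j) (hcons : j ≠ i - 1 ∧ j ≠ i + 1) :
    ∃ w : WVert m, (w = some (i + 1) ∨ w = some (j + 1) ∨ w = none) ∧
      ¬ (warc m u (some i) w ↔ warc m u (some j) w) := by
  have : NeZero (2 * m) := ⟨by omega⟩
  have h0 : ((2 * m : ℕ) : ZMod (2 * m)) = 0 := ZMod.natCast_self _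
  obtain ⟨d, hd, hdb⟩ : ∃ d : ℕ, d < 2 * m ∧ j = i + (d : ZMod (2 * m)) :=
    ⟨(j - i).val, ZMod.val_lt _, by simp⟩
  obtain ⟨q, hq⟩ : ∃ q, d = 2 * q + 1 := by
    rcases Nat.even_or_odd' d with ⟨k, hk | hk⟩
    · exfalso
      apply hpar
      refine ⟨-(k : ZMod (2 * m)), ?_⟩
      rw [hdb, hk]; push_cast; ring
    · exact ⟨k, hk⟩
  have hd1 : d ≠ 1 := by
    rintro rfl; exact hcons.2 (by simpa using hdb)
  have hd2 : d ≠ 2 * m - 1 := by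
    rintro rfl
    apply hcons.1
    rw [hdb, Nat.cast_sub (by omega), h0]; push_cast; ring
  subst hq
  have v1 : (1 : ZMod (2 * m)).val = 1 := by
    have := ZMod.val_cast_of_lt (n := 2 * m) (a := 1) (by omega)
    simpa using this
  -- arcs at `i+1`
  have A1 : ∀ a : ZMod (2 * m), Cplus m a (some a) (some (a + 1)) := by
    intro a
    rw [wal_C_some m hm]; left; simp [v1]
  have A2 : Cplus m (i + ((q + 1 : ℕ) : ZMod (2 * m))) (some j) (some (i + 1)) := by
    rw [wal_C_some m hm]; right
    have r1 : i + 1 - j = ((2 * m - 2 * q : ℕ) : ZMod (2 * m)) := by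
      rw [hdb, Nat.cast_sub (by omega), h0]; push_cast; ring
    have r2 : i + ((q + 1 : ℕ) : ZMod (2 * m)) - j = ((2 * m - q : ℕ) : ZMod (2 * m)) := by
      rw [hdb, Nat.cast_sub (by omega), h0]; push_cast; ring
    rw [r1, r2, ZMod.val_cast_of_lt (by omega), ZMod.val_cast_of_lt (by omega)]
    omega
  have A3 : Cplus m (i + ((q + 1 : ℕ) : ZMod (2 * m)) + (m : ZMod (2 * m)))
      (some i) (some (j + 1)) := by
    rw [wal_C_some m hm]; right
    have r1 : j + 1 - i = ((2 * q + 2 : ℕ) : ZMod (2 * m)) := by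
      rw [hdb]; push_cast; ring
    have r2 : i + ((q + 1 : ℕ) : ZMod (2 * m)) + (m : ZMod (2 * m)) - i
        = ((q + 1 + m : ℕ) : ZMod (2 * m)) := by
      push_cast; ring
    rw [r1, r2, ZMod.val_cast_of_lt (by omega), ZMod.val_cast_of_lt (by omega)]
    omega
  have A4 : ∀ a : ZMod (2 * m), Cplus m (a + (m : ZMod (2 * m))) (some a) none := by
    intro a
    rw [wal_C_some_none, add_assoc, wal_two_m, add_zero]
  by_contra! hcon
  have B1 := hcon (some (i + 1)) (Or.inl rfl)
  have B2 := hcon (some (j + 1)) (Or.inr (Or.inl rfl))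
  have B3 := hcon none (Or.inr (Or.inr rfl))
  rw [wal_arc_of_C m hm u _ _ _ (A1 i), wal_arc_of_C m hm u _ _ _ A2] at B1
  rw [wal_arc_of_C m hm u _ _ _ A3, wal_arc_of_C m hm u _ _ _ (A1 j), wal_S_add m hm] at B2
  rw [wal_arc_of_C m hm u _ _ _ (A4 i), wal_arc_of_C m hm u _ _ _ (A4 j), wal_S_add m hm,
    wal_S_add m hm] at B3
  tauto

/-- Let `a` be the arc of `W_u` between `i` and `j`, where `i` and `j`
have opposite parity and are not consecutive, and suppose `i`, `j`, `ℓ` induce a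
directed triangle. Then `d(a) > 1`, or `ℓ ∈ {i−1, i+1, j−1, j+1}`, or
`3 ∣ 2m+1` with `{i',j'} = {i,j}`, `j' = i' + (2m+1)/3`, `ℓ = 2j'−i'−1`, or
`3 ∣ 4m+1` with `{i',j'} = {i,j}`, `j' = i' + (4m+1)/3`, `ℓ = 2j'−i'−1`. -/
theorem walecki_stmt9 (m : ℕ) (hm : 1 ≤ m) (u : Fin m → ZMod 2)
    (i j ℓ : ZMod (2 * m))
    (hpar : ¬ sameParity m i j)
    (hcons : j ≠ i - 1 ∧ j ≠ i + 1)
    (x y : WVert m)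
    (hxy : (x = some i ∧ y = some j) ∨ (x = some j ∧ y = some i))
    (ha : warc m u x y)
    (htri : dirTri (warc m u) (some i) (some j) (some ℓ)) :
    1 < dcount (warc m u) x y ∨
    ℓ ∈ ({i - 1, i + 1, j - 1, j + 1} : Set (ZMod (2 * m))) ∨
    (3 ∣ 2 * m + 1 ∧ ∃ i' j' : ZMod (2 * m),
      ({i', j'} : Set (ZMod (2 * m))) = {i, j} ∧
      j' = i' + (((2 * m + 1) / 3 : ℕ) : ZMod (2 * m)) ∧ ℓ = 2 * j' - i' - 1) ∨
    (3 ∣ 4 * m + 1 ∧ ∃ i' j' : ZMod (2 * m),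
      ({i', j'} : Set (ZMod (2 * m))) = {i, j} ∧
      j' = i' + (((4 * m + 1) / 3 : ℕ) : ZMod (2 * m)) ∧ ℓ = 2 * j' - i' - 1) := by
  by_cases hℓ : ℓ ∈ ({i - 1, i + 1, j - 1, j + 1} : Set (ZMod (2 * m)))
  · exact Or.inr (Or.inl hℓ)
  left
  have : NeZero (2 * m) := ⟨by omega⟩
  simp only [Set.mem_insert_iff, Set.mem_singleton_iff, not_or] at hℓ
  obtain ⟨-, hℓ1, -, hℓ2⟩ := hℓ
  obtain ⟨w, hw, hdis⟩ := wal_disagree m hm u i j hpar hcons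
  have h10 : (1 : ZMod (2 * m)) ≠ 0 := by
    intro h
    have h' : ((1 : ℕ) : ZMod (2 * m)) = ((0 : ℕ) : ZMod (2 * m)) := by simpa using h
    exact absurd (wal_cast_inj m hm 1 0 (by omega) (by omega) h') (by omega)
  have hji : j + 1 ≠ i := fun h => hcons.1 (by rw [← h]; ring)
  have hwi : w ≠ some i := by
    rcases hw with rfl | rfl | rfl <;> simp [h10, hji]
  have hwj : w ≠ some j := by
    rcases hw with rfl | rfl | rfl <;> simp [h10, hcons.2.symm]
  have hwl : w ≠ some ℓ := by
    rcases hw with rfl | rfl | rfl <;> simp [Ne.symm hℓ1, Ne.symm hℓ2]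
  obtain ⟨hij, hjl, hil, htri⟩ := htri
  rcases hxy with ⟨rfl, rfl⟩ | ⟨rfl, rfl⟩
  · rcases htri with ⟨h1, h2, h3⟩ | ⟨h1, h2, h3⟩
    · exact wal_two_disagree m hm u _ _ _ w ha ⟨h2, h3⟩ hwi hwj hwl hdis
    · exact absurd ha ((wal_arc_tour m hm u _ _ hij).1 h3)
  · rcases htri with ⟨h1, h2, h3⟩ | ⟨h1, h2, h3⟩
    · exact absurd h1 ((wal_arc_tour m hm u _ _ hij).1 ha)
    · exact wal_two_disagree m hm u _ _ _ w ha ⟨h1, h2⟩ hwj hwi hwl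
        (fun h => hdis h.symm)
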